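/- arXiv:0808.3773 — 2 statements merged into one kernel-verified Lean document; each statement's English description precedes it below -/
import Mathlib

section
/- Williamson's theorem: For every real symmetric positive definite matrix A of size 2N×2N there exists a real symplectic matrix S (i.e. S σ Sᵀ = σ, where σ is the standard symplectic form σ = [[0, 1_N], [−1_N, 0]]) such that S A Sᵀ = D ⊕ D, where D = diag(d₁, …, d_N) with d₁, …, d_N > 0. Moreover, the multiset {d₁², …, d_N², d₁², …, d_N²} equals the multiset of eigenvalues of the matrix −(σA)². -/
open scoped BigOperators
open Polynomial Matrix

/-- The standard symplectic form `σ = [[0, 1_N], [−1_N, 0]]` on a `2N`-dimensional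
real space (indexed by `Fin N ⊕ Fin N`). -/
def symplecticForm (N : ℕ) : Matrix (Fin N ⊕ Fin N) (Fin N ⊕ Fin N) ℝ :=
  Matrix.fromBlocks 0 1 (-1) 0

open scoped RealInnerProductSpace in
theorem skew_step {E : Type*} [NormedAddCommGroup E] [InnerProductSpace ℝ E]
    [FiniteDimensional ℝ E] (K : E →ₗ[ℝ] E) (hK : ∀ x y, ⟪K x, y⟫ = -⟪x, K y⟫)
    (hinj : ∀ x, K x = 0 → x = 0) (W : Submodule ℝ E) (hW : ∀ x ∈ W, K x ∈ W)
    (hne : W ≠ ⊤) :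
    ∃ (v w : E) (e : ℝ), 0 < e ∧ v ∈ Wᗮ ∧ w ∈ Wᗮ ∧ ⟪v, v⟫ = 1 ∧ ⟪w, w⟫ = 1 ∧ ⟪v, w⟫ = 0 ∧
      K v = -(e • w) ∧ K w = e • v := by
  have hW' : ∀ x ∈ Wᗮ, K x ∈ Wᗮ := by
    intro x hx
    rw [Submodule.mem_orthogonal] at hx ⊢
    intro u hu
    have h1 := hK u x
    rw [hx _ (hW u hu)] at h1
    linarith
  have hT : (K ∘ₗ K).IsSymmetric := by
    intro x y
    simp [hK]
  have hinv : ∀ x ∈ Wᗮ, (K ∘ₗ K) x ∈ Wᗮ := fun x hx => hW' _ (hW' _ hx)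
  have hnt : Nontrivial Wᗮ := by
    rw [Submodule.nontrivial_iff_ne_bot]
    intro h
    exact hne (by rwa [Submodule.orthogonal_eq_bot_iff] at h)
  have hS := hT.restrict_invariant hinv
  obtain ⟨v0, hv0⟩ := (hS.hasEigenvalue_iSup_of_finiteDimensional).exists_hasEigenvector
  generalize (⨆ x : {x : Wᗮ // x ≠ 0}, _ : ℝ) = μ at hv0
  have hne0 : (v0 : E) ≠ 0 := by simpa using hv0.2
  have heq : K (K (v0 : E)) = μ • (v0 : E) := by
    have := congrArg Subtype.val hv0.apply_eq_smul
    simpa using this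
  obtain ⟨v, hv, hvv, hKv⟩ : ∃ v : E, v ∈ Wᗮ ∧ ⟪v, v⟫ = 1 ∧ K (K v) = μ • v := by
    refine ⟨‖(v0 : E)‖⁻¹ • (v0 : E), Submodule.smul_mem _ _ v0.2, ?_, ?_⟩
    · rw [real_inner_self_eq_norm_sq, norm_smul]
      simp [hne0]
    · simp only [map_smul, heq]
      rw [smul_comm]
  have hvne : v ≠ 0 := by rintro rfl; simp at hvv
  have hKvne : K v ≠ 0 := fun h => hvne (hinj _ h)
  have h1 : ⟪K v, K v⟫ = -μ := by
    rw [hK, hKv, inner_smul_right, hvv]; ring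
  have hpos : 0 < -μ := by
    rw [← h1]; exact real_inner_self_pos.mpr hKvne
  have h0 : ⟪v, K v⟫ = 0 := by
    have := hK v v
    rw [real_inner_comm] at this
    linarith
  have he : 0 < Real.sqrt (-μ) := Real.sqrt_pos.mpr hpos
  have hsq : Real.sqrt (-μ) * Real.sqrt (-μ) = -μ := Real.mul_self_sqrt hpos.le
  generalize Real.sqrt (-μ) = e at he hsq
  refine ⟨v, -(e⁻¹ • K v), e, he, hv, ?_, hvv, ?_, ?_, ?_, ?_⟩
  · exact Submodule.neg_mem _ (Submodule.smul_mem _ _ (hW' _ hv))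
  · simp only [inner_neg_left, inner_neg_right, inner_smul_left, inner_smul_right, h1, ← hsq]
    simp; field_simp
  · simp [inner_smul_right, h0]
  · simp [smul_smul, he.ne']
  · have : μ = -(e * e) := by linarith
    simp only [map_neg, map_smul, hKv, smul_smul, this, ← neg_smul]
    congr 1; field_simp

open scoped RealInnerProductSpace in
theorem skew_family {E : Type*} [NormedAddCommGroup E] [InnerProductSpace ℝ E]
    [FiniteDimensional ℝ E] (K : E →ₗ[ℝ] E) (hK : ∀ x y, ⟪K x, y⟫ = -⟪x, K y⟫)
    (hinj : ∀ x, K x = 0 → x = 0) (k : ℕ) (hk : 2 * k ≤ Module.finrank ℝ E) :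
    ∃ (a b : Fin k → E) (e : Fin k → ℝ), (∀ i, 0 < e i) ∧
      (∀ i j, ⟪a i, a j⟫ = if i = j then 1 else 0) ∧
      (∀ i j, ⟪b i, b j⟫ = if i = j then 1 else 0) ∧
      (∀ i j, ⟪a i, b j⟫ = 0) ∧
      (∀ i, K (a i) = -(e i • b i)) ∧ (∀ i, K (b i) = e i • a i) := by
  induction k with
  | zero => exact ⟨Fin.elim0, Fin.elim0, Fin.elim0, by simp⟩
  | succ k ih =>
    obtain ⟨a, b, e, he, haa, hbb, hab, hKa, hKb⟩ := ih (by omega)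
    let W := Submodule.span ℝ (Set.range (Sum.elim a b))
    have haW : ∀ i, a i ∈ W := fun i => Submodule.subset_span ⟨Sum.inl i, rfl⟩
    have hbW : ∀ i, b i ∈ W := fun i => Submodule.subset_span ⟨Sum.inr i, rfl⟩
    have hne : W ≠ ⊤ := by
      intro h
      have h1 : Module.finrank ℝ W ≤ _ := finrank_range_le_card (R := ℝ) (Sum.elim a b)
      rw [h, finrank_top] at h1
      simp at h1
      omega
    have hW : ∀ x ∈ W, K x ∈ W := by
      intro x hx
      have : W ≤ W.comap K := by
        refine Submodule.span_le.mpr ?_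
        rintro _ ⟨i | i, rfl⟩
        · simpa [hKa] using W.smul_mem _ (hbW i)
        · simpa [hKb] using W.smul_mem _ (haW i)
      exact this hx
    obtain ⟨v, w, c, hc, hv, hw, hvv, hww, hvw, hKv, hKw⟩ := skew_step K hK hinj W hW hne
    rw [Submodule.mem_orthogonal] at hv hw
    have hwv : ⟪w, v⟫ = 0 := by rw [real_inner_comm]; exact hvw
    have h1 := fun i => hv _ (haW i)
    have h2 := fun i => hv _ (hbW i)
    have h3 := fun i => hw _ (haW i)
    have h4 := fun i => hw _ (hbW i)
    have h1' : ∀ i, ⟪v, a i⟫ = 0 := fun i => by rw [real_inner_comm]; exact h1 i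
    have h2' : ∀ i, ⟪v, b i⟫ = 0 := fun i => by rw [real_inner_comm]; exact h2 i
    have h3' : ∀ i, ⟪w, a i⟫ = 0 := fun i => by rw [real_inner_comm]; exact h3 i
    have h4' : ∀ i, ⟪w, b i⟫ = 0 := fun i => by rw [real_inner_comm]; exact h4 i
    refine ⟨Fin.cons v a, Fin.cons w b, Fin.cons c e, ?_, ?_, ?_, ?_, ?_, ?_⟩
    · intro i; refine Fin.cases ?_ (fun i => ?_) i <;> simp [hc, he]
    · intro i j
      refine Fin.cases ?_ (fun i => ?_) i <;> refine Fin.cases ?_ (fun j => ?_) j <;>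
        simp only [Fin.cons_zero, Fin.cons_succ, hvv, h1, h1', haa, Fin.succ_inj, Fin.succ_ne_zero, (Fin.succ_ne_zero _).symm, if_true, if_false]
    · intro i j
      refine Fin.cases ?_ (fun i => ?_) i <;> refine Fin.cases ?_ (fun j => ?_) j <;>
        simp only [Fin.cons_zero, Fin.cons_succ, hww, h4, h4', hbb, Fin.succ_inj, Fin.succ_ne_zero, (Fin.succ_ne_zero _).symm, if_true, if_false]
    · intro i j
      refine Fin.cases ?_ (fun i => ?_) i <;> refine Fin.cases ?_ (fun j => ?_) j <;>
        simp only [Fin.cons_zero, Fin.cons_succ, hvw, h2', h3, hab]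
    · intro i; refine Fin.cases ?_ (fun i => ?_) i <;> simp [hKv, hKa]
    · intro i; refine Fin.cases ?_ (fun i => ?_) i <;> simp [hKw, hKb]

theorem skew_matrix (N : ℕ) (K : Matrix (Fin N ⊕ Fin N) (Fin N ⊕ Fin N) ℝ)
    (hK : Kᵀ = -K) (hu : IsUnit K) :
    ∃ (O : Matrix (Fin N ⊕ Fin N) (Fin N ⊕ Fin N) ℝ) (e : Fin N → ℝ), (∀ i, 0 < e i) ∧
      O * Oᵀ = 1 ∧
      O * K * Oᵀ = Matrix.fromBlocks 0 (Matrix.diagonal e) (-Matrix.diagonal e) 0 := by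
  have hin : ∀ x y : EuclideanSpace ℝ (Fin N ⊕ Fin N),
      inner ℝ x y = x.ofLp ⬝ᵥ y.ofLp := by
    intro x y
    rw [EuclideanSpace.inner_eq_star_dotProduct, dotProduct_comm]
    simp
  have hsk : ∀ x y : EuclideanSpace ℝ (Fin N ⊕ Fin N),
      inner ℝ (Matrix.toLpLin 2 2 K x) y = -inner ℝ x (Matrix.toLpLin 2 2 K y) := by
    intro x y
    rw [hin, hin]
    simp only [Matrix.ofLp_toLpLin, Matrix.toLin'_apply]
    rw [dotProduct_mulVec, ← mulVec_transpose, hK, neg_mulVec, neg_dotProduct, neg_neg]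
  have hinj : ∀ x : EuclideanSpace ℝ (Fin N ⊕ Fin N), Matrix.toLpLin 2 2 K x = 0 → x = 0 := by
    intro x hx
    have h1 : K *ᵥ x.ofLp = K *ᵥ 0 := by
      have := congrArg WithLp.ofLp hx
      simpa using this
    have h2 := Matrix.mulVec_injective_of_isUnit hu h1
    ext i
    exact congrFun h2 i
  obtain ⟨a, b, e, he, haa, hbb, hab, hKa, hKb⟩ := skew_family _ hsk hinj N
    (by simp; omega)
  have hba : ∀ i j, inner ℝ (b i) (a j) = 0 := fun i j => by rw [real_inner_comm]; exact hab j i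
  let r : Fin N ⊕ Fin N → EuclideanSpace ℝ (Fin N ⊕ Fin N) := Sum.elim a b
  refine ⟨Matrix.of fun p => (r p).ofLp, e, he, ?_, ?_⟩
  · ext p q
    have : ((Matrix.of fun p => (r p).ofLp) * (Matrix.of fun p => (r p).ofLp)ᵀ) p q
        = inner ℝ (r p) (r q) := by
      rw [hin]; rfl
    rw [this]
    rcases p with i | i <;> rcases q with j | j <;>
      simp [r, haa, hbb, hab, hba, Matrix.one_apply]
  · ext p q
    have : ((Matrix.of fun p => (r p).ofLp) * K * (Matrix.of fun p => (r p).ofLp)ᵀ) p q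
        = inner ℝ (r p) (Matrix.toLpLin 2 2 K (r q)) := by
      rw [hin, Matrix.mul_assoc]; rfl
    rw [this]
    rcases p with i | i <;> rcases q with j | j <;>
      simp only [r, Sum.elim_inl, Sum.elim_inr, hKa, hKb, inner_neg_right, inner_smul_right,
        haa, hbb, hab, hba, Matrix.fromBlocks_apply₁₁, Matrix.fromBlocks_apply₁₂,
        Matrix.fromBlocks_apply₂₁, Matrix.fromBlocks_apply₂₂, Matrix.diagonal_apply,
        Matrix.neg_apply, Matrix.zero_apply] <;>
      by_cases h : i = j <;> first | (subst h; simp) | simp [h]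

theorem symplecticForm_transpose (N : ℕ) : (symplecticForm N)ᵀ = -symplecticForm N := by
  simp [symplecticForm, Matrix.fromBlocks_transpose, Matrix.fromBlocks_neg]

theorem symplecticForm_sq (N : ℕ) : symplecticForm N * symplecticForm N = -1 := by
  rw [← Matrix.fromBlocks_one, Matrix.fromBlocks_neg]
  simp [symplecticForm, Matrix.fromBlocks_multiply]

theorem symp_charpoly (N : ℕ) (A S : Matrix (Fin N ⊕ Fin N) (Fin N ⊕ Fin N) ℝ) (d : Fin N → ℝ)
    (h1 : S * symplecticForm N * Sᵀ = symplecticForm N)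
    (h2 : S * A * Sᵀ = Matrix.fromBlocks (Matrix.diagonal d) 0 0 (Matrix.diagonal d)) :
    (-((symplecticForm N * A) ^ 2)).charpoly = ∏ i : Fin N, (X - C (d i ^ 2)) ^ 2 := by
  have hs := symplecticForm_sq N
  have hD : -((symplecticForm N *
      Matrix.fromBlocks (Matrix.diagonal d) 0 0 (Matrix.diagonal d)) ^ 2) =
      Matrix.diagonal (Sum.elim (fun i => d i ^ 2) (fun i => d i ^ 2)) := by
    rw [← Matrix.fromBlocks_diagonal, pow_two]
    simp only [symplecticForm, Matrix.fromBlocks_multiply]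
    simp [Matrix.fromBlocks_neg, pow_two, -Matrix.fromBlocks_diagonal]
  generalize symplecticForm N = σ at *
  -- the right inverse of `S`
  have hR : S * (-(σ * Sᵀ * σ)) = 1 := by
    have : S * (-(σ * Sᵀ * σ)) = -((S * σ * Sᵀ) * σ) := by noncomm_ring
    rw [this, h1, hs, neg_neg]
  have hL : -(σ * Sᵀ * σ) * S = 1 := mul_eq_one_comm.mp hR
  have hT : Sᵀ * σ * S = σ := by
    have : Sᵀ * σ * S = σ * (-(σ * Sᵀ * σ) * S) - (σ * σ + 1) * (-(Sᵀ * σ * S)) := by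
      noncomm_ring
    rw [this, hL, hs]; simp
  have hU : IsUnit Sᵀ := by
    rw [Matrix.isUnit_transpose]
    exact ⟨⟨S, _, hR, hL⟩, rfl⟩
  obtain ⟨u, hu⟩ := hU
  have hc : σ * A * Sᵀ = Sᵀ * (σ * (S * A * Sᵀ)) := by
    have : Sᵀ * (σ * (S * A * Sᵀ)) = (Sᵀ * σ * S) * A * Sᵀ := by noncomm_ring
    rw [this, hT]
  rw [h2] at hc
  have hc2 : -((σ * A) ^ 2) * Sᵀ = Sᵀ * Matrix.diagonal (Sum.elim (fun i => d i ^ 2) (fun i => d i ^ 2)) := by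
    rw [← hD]
    calc -((σ * A) ^ 2) * Sᵀ = -((σ * A) * (σ * A * Sᵀ)) := by noncomm_ring
      _ = -((σ * A * Sᵀ) * (σ * Matrix.fromBlocks (Matrix.diagonal d) 0 0 (Matrix.diagonal d))) := by
        conv_lhs => rw [hc]
        simp only [Matrix.mul_assoc]
      _ = _ := by rw [hc]; noncomm_ring
  have hc3 : -((σ * A) ^ 2) = (u : Matrix _ _ ℝ) * Matrix.diagonal (Sum.elim (fun i => d i ^ 2) (fun i => d i ^ 2)) * (↑(u⁻¹) : Matrix _ _ ℝ) := by
    rw [hu, ← hc2, ← hu, Units.mul_inv_cancel_right]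
  rw [hc3, Matrix.coe_units_inv, Matrix.charpoly_units_conj, Matrix.charpoly_diagonal]
  simp [Fintype.prod_sum_type, pow_two, Finset.prod_mul_distrib]

open scoped MatrixOrder in
theorem exists_transpose_mul_self {n : Type*} [Fintype n] [DecidableEq n] (A : Matrix n n ℝ)
    (hA : A.PosDef) : ∃ B : Matrix n n ℝ, A = Bᵀ * B := by
  obtain ⟨B, hB⟩ := CStarAlgebra.nonneg_iff_eq_star_mul_self.mp hA.posSemidef.nonneg
  refine ⟨B, ?_⟩
  rw [hB, Matrix.star_eq_conjTranspose, Matrix.conjTranspose_eq_transpose_of_trivial]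

/-- **Williamson's theorem.** For every real symmetric positive definite `2N×2N` matrix `A`
there is a real symplectic matrix `S` (i.e. `S σ Sᵀ = σ`) such that `S A Sᵀ = D ⊕ D` with
`D = diag(d₁, …, d_N)`, `dᵢ > 0`. Moreover the multiset `{d₁², …, d_N²}`, each element taken
twice, is the multiset of eigenvalues of `−(σA)²`, expressed here through the characteristic
polynomial: `charpoly(−(σA)²) = ∏ᵢ (X − dᵢ²)²`. -/
theorem williamson (N : ℕ) (A : Matrix (Fin N ⊕ Fin N) (Fin N ⊕ Fin N) ℝ)
    (hA : A.PosDef) :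
    ∃ (S : Matrix (Fin N ⊕ Fin N) (Fin N ⊕ Fin N) ℝ) (d : Fin N → ℝ),
      (∀ i, 0 < d i) ∧
      S * symplecticForm N * Sᵀ = symplecticForm N ∧
      S * A * Sᵀ = Matrix.fromBlocks (Matrix.diagonal d) 0 0 (Matrix.diagonal d) ∧
      (-((symplecticForm N * A) ^ 2)).charpoly =
        ∏ i : Fin N, (X - C (d i ^ 2)) ^ 2 := by
  obtain ⟨B, hB⟩ := exists_transpose_mul_self A hA
  have hAu := hA.isUnit
  have hBu : IsUnit B := by
    rw [Matrix.isUnit_iff_isUnit_det] at hAu ⊢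
    rw [hB, Matrix.det_mul] at hAu
    exact isUnit_of_mul_isUnit_right hAu
  obtain ⟨P, hBP, hPB⟩ : ∃ P, B * P = 1 ∧ P * B = 1 := by
    obtain ⟨u, rfl⟩ := hBu
    exact ⟨_, u.mul_inv, u.inv_mul⟩
  have hPBt : Bᵀ * Pᵀ = 1 := by rw [← Matrix.transpose_mul, hPB, Matrix.transpose_one]
  have hBPt : Pᵀ * Bᵀ = 1 := by rw [← Matrix.transpose_mul, hBP, Matrix.transpose_one]
  have hsu : IsUnit (symplecticForm N) := by
    refine ⟨⟨symplecticForm N, -symplecticForm N, ?_, ?_⟩, rfl⟩ <;> simp [symplecticForm_sq]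
  have hPu : IsUnit P := ⟨⟨P, B, hPB, hBP⟩, rfl⟩
  obtain ⟨O, e, he, hO, hOK⟩ := skew_matrix N (Pᵀ * symplecticForm N * P)
    (by simp [Matrix.transpose_mul, symplecticForm_transpose, Matrix.mul_assoc])
    ((IsUnit.mul ⟨⟨Pᵀ, Bᵀ, hBPt, hPBt⟩, rfl⟩ hsu).mul hPu)
  let c : Fin N → ℝ := fun i => (Real.sqrt (e i))⁻¹
  have hc : ∀ i, c i * c i = (e i)⁻¹ := fun i => by
    simp only [c]; rw [← mul_inv, Real.mul_self_sqrt (he i).le]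
  have hc' : ∀ i, c i * e i * c i = 1 := fun i => by
    rw [mul_right_comm, hc, inv_mul_cancel₀ (he i).ne']
  let R : Matrix (Fin N ⊕ Fin N) (Fin N ⊕ Fin N) ℝ :=
    Matrix.fromBlocks (Matrix.diagonal c) 0 0 (Matrix.diagonal c)
  have hRt : Rᵀ = R := by simp [R, Matrix.fromBlocks_transpose]
  have h1 : (R * O * Pᵀ) * symplecticForm N * (R * O * Pᵀ)ᵀ = symplecticForm N := by
    calc _ = R * (O * (Pᵀ * symplecticForm N * P) * Oᵀ) * R := by
          simp only [Matrix.transpose_mul, hRt, Matrix.transpose_transpose, Matrix.mul_assoc]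
      _ = _ := by
          rw [hOK]
          simp only [R, symplecticForm, Matrix.fromBlocks_multiply]
          simp [hc', -Matrix.fromBlocks_diagonal]
          rw [← Matrix.diagonal_neg]; simp
  have h2 : (R * O * Pᵀ) * A * (R * O * Pᵀ)ᵀ =
      Matrix.fromBlocks (Matrix.diagonal fun i => (e i)⁻¹) 0 0
        (Matrix.diagonal fun i => (e i)⁻¹) := by
    calc _ = R * (O * ((Pᵀ * Bᵀ) * (B * P)) * Oᵀ) * R := by
          rw [hB]
          simp only [Matrix.transpose_mul, hRt, Matrix.transpose_transpose, Matrix.mul_assoc]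
      _ = _ := by
          rw [hBPt, hBP, Matrix.mul_one, Matrix.mul_one, hO]
          simp [R, Matrix.fromBlocks_multiply, hc]
  exact ⟨R * O * Pᵀ, fun i => (e i)⁻¹, fun i => inv_pos.mpr (he i), h1, h2,
    symp_charpoly N A _ _ h1 h2⟩
end

section
/- Area law for matrix-product states: Let d, D, N ≥ 1, and for each site k ∈ {1, …, N} and each j ∈ {1, …, d} let A^{(k)}[j] be a complex D×D matrix. Define ψ : (Fin N → Fin d) → ℂ by ψ(i₁, …, i_N) = tr[A^{(1)}[i₁] A^{(2)}[i₂] ⋯ A^{(N)}[i_N]], and assume ψ ≠ 0; let ρ = ψψ†/‖ψ‖² be the associated pure density matrix on (ℂ^d)^{⊗N}. Then for every contiguous block I = {1, …, n} with 1 ≤ n ≤ N, the reduced density matrix ρ_I (the partial trace of ρ over the sites not in I) has rank at most D², and consequently its von Neumann entropy satisfies S(ρ_I) ≤ 2 log₂ D. -/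
open scoped BigOperators
open Matrix

/-- The von Neumann entropy (in bits) of a matrix (junk value `0` if not Hermitian). -/
noncomputable def vNEntropy {n : Type*} [Fintype n] [DecidableEq n]
    (ρ : Matrix n n ℂ) : ℝ :=
  if h : ρ.IsHermitian then -∑ i, h.eigenvalues i * Real.logb 2 (h.eigenvalues i) else 0

/-- The reduced density matrix (partial trace over the sites outside `I`). -/
noncomputable def reduced {V : Type*} [Fintype V] [DecidableEq V] {d : ℕ} (I : Finset V)
    (ρ : Matrix (V → Fin d) (V → Fin d) ℂ) :
    Matrix ({i // i ∈ I} → Fin d) ({i // i ∈ I} → Fin d) ℂ :=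
  fun x y => ∑ z : {i // i ∉ I} → Fin d,
    ρ (fun i => if h : i ∈ I then x ⟨i, h⟩ else z ⟨i, h⟩)
      (fun i => if h : i ∈ I then y ⟨i, h⟩ else z ⟨i, h⟩)

open scoped ComplexOrder in
lemma posSemidef_smul_gram {ι κ : Type*} [Fintype ι] [Fintype κ] (M : Matrix ι κ ℂ)
    (c : ℝ) (hc : 0 ≤ c) : ((c : ℂ) • (M * Mᴴ)).PosSemidef := by
  refine (Matrix.posSemidef_self_mul_conjTranspose M).smul ?_
  exact_mod_cast hc

open scoped ComplexOrder in
lemma entropy_le_of_rank {ι : Type*} [Fintype ι] [DecidableEq ι] (ρ : Matrix ι ι ℂ)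
    (hpos : ρ.PosSemidef) (htr : ρ.trace = 1) (K : ℕ) (hK : 1 ≤ K) (hr : ρ.rank ≤ K) :
    vNEntropy ρ ≤ Real.logb 2 K := by
  have hH : ρ.IsHermitian := hpos.isHermitian
  have hsum : ∑ i, hH.eigenvalues i = 1 := by
    have h := hH.trace_eq_sum_eigenvalues
    rw [htr] at h
    have h2 : ((1 : ℝ) : ℂ) = ((∑ i, hH.eigenvalues i : ℝ) : ℂ) := by
      push_cast
      simpa using h
    exact (Complex.ofReal_injective h2).symm
  have hcard : ((Finset.univ.filter fun i => hH.eigenvalues i ≠ 0).card : ℝ) ≤ K := by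
    have h := hH.rank_eq_card_non_zero_eigs
    rw [Fintype.card_subtype] at h
    rw [h] at hr
    exact_mod_cast hr
  have hKpos : (0 : ℝ) < K := by exact_mod_cast hK
  have hl2 : (0 : ℝ) < Real.log 2 := Real.log_pos (by norm_num)
  unfold vNEntropy
  rw [dif_pos hH]
  have key : ∀ i, -(hH.eigenvalues i * Real.log (hH.eigenvalues i)) ≤
      hH.eigenvalues i * Real.log K - hH.eigenvalues i +
        (if hH.eigenvalues i ≠ 0 then (1 / K : ℝ) else 0) := by
    intro i
    have h0 := hpos.eigenvalues_nonneg i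
    by_cases hz : hH.eigenvalues i = 0
    · simp [hz]
    · have hp : 0 < hH.eigenvalues i := lt_of_le_of_ne h0 (Ne.symm hz)
      rw [if_pos hz]
      generalize hH.eigenvalues i = t at *
      have h1 := Real.log_le_sub_one_of_pos (x := 1 / (K * t)) (by positivity)
      rw [one_div, Real.log_inv, Real.log_mul hKpos.ne' hp.ne'] at h1
      have h2 := mul_le_mul_of_nonneg_left h1 hp.le
      have h3 : t * ((K * t)⁻¹ - 1) = 1 / K - t := by field_simp
      rw [h3] at h2
      linarith
  have hs := Finset.sum_le_sum fun i (_ : i ∈ Finset.univ) => key i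
  rw [Finset.sum_add_distrib, Finset.sum_sub_distrib, ← Finset.sum_mul, hsum,
    ← Finset.sum_filter, Finset.sum_const, nsmul_eq_mul, Finset.sum_neg_distrib] at hs
  have h4 : ((Finset.univ.filter fun i => hH.eigenvalues i ≠ 0).card : ℝ) * (1 / K) ≤ 1 := by
    rw [mul_one_div]
    exact (div_le_one hKpos).2 hcard
  have h5 : -∑ i, hH.eigenvalues i * Real.log (hH.eigenvalues i) ≤ Real.log K := by linarith
  have h6 : -∑ i, hH.eigenvalues i * Real.logb 2 (hH.eigenvalues i) =
      (-∑ i, hH.eigenvalues i * Real.log (hH.eigenvalues i)) / Real.log 2 := by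
    simp only [Real.logb, neg_div, Finset.sum_div, mul_div_assoc]
  rw [h6, Real.logb]
  gcongr

/-- **Area law for matrix-product states.** For an MPS with periodic boundary conditions,
amplitudes `ψ(i₁,…,i_N) = tr[A^{(1)}[i₁] ⋯ A^{(N)}[i_N]]` with `D×D` matrices, and
normalized density matrix `ρ = ψψ†/‖ψ‖²`, the reduced state on any block `{0,…,n−1}` has
rank at most `D²` and entanglement entropy at most `2·log₂ D`. -/
theorem mps_area_law (d D N : ℕ) (hd : 1 ≤ d) (hD : 1 ≤ D) (hN : 1 ≤ N)
    (A : Fin N → Fin d → Matrix (Fin D) (Fin D) ℂ)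
    (ψ : (Fin N → Fin d) → ℂ)
    (hψ : ∀ x, ψ x = ((List.ofFn fun k => A k (x k)).prod).trace)
    (hne : ψ ≠ 0)
    (ρ : Matrix (Fin N → Fin d) (Fin N → Fin d) ℂ)
    (hρ : ∀ x y, ρ x y =
      (((∑ z, ‖ψ z‖ ^ 2 : ℝ) : ℂ))⁻¹ * (ψ x * starRingEnd ℂ (ψ y)))
    (n : ℕ) (hn1 : 1 ≤ n) (hnN : n ≤ N) :
    (reduced (Finset.univ.filter fun i : Fin N => (i : ℕ) < n) ρ).rank ≤ D ^ 2 ∧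
    vNEntropy (reduced (Finset.univ.filter fun i : Fin N => (i : ℕ) < n) ρ) ≤
      2 * Real.logb 2 D := by
  classical
  obtain ⟨m, rfl⟩ := Nat.exists_eq_add_of_le hnN
  set I : Finset (Fin (n + m)) := Finset.univ.filter fun i : Fin (n + m) => (i : ℕ) < n with hI
  have hmem : ∀ k : Fin n, Fin.castAdd m k ∈ I := fun k => by simp [hI]
  have hnmem : ∀ k : Fin m, Fin.natAdd n k ∉ I := fun k => by simp [hI]
  let e := (Equiv.piEquivPiSubtypeProd (fun i => i ∈ I) (fun _ : Fin (n + m) => Fin d)).symm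
  let M : Matrix ({i // i ∈ I} → Fin d) ({i // i ∉ I} → Fin d) ℂ := fun x z => ψ (e (x, z))
  let L : ({i // i ∈ I} → Fin d) → Matrix (Fin D) (Fin D) ℂ := fun x =>
    (List.ofFn fun k : Fin n => A (Fin.castAdd m k) (x ⟨_, hmem k⟩)).prod
  let R : ({i // i ∉ I} → Fin d) → Matrix (Fin D) (Fin D) ℂ := fun z =>
    (List.ofFn fun k : Fin m => A (Fin.natAdd n k) (z ⟨_, hnmem k⟩)).prod
  have hsplit : ∀ x z, ψ (e (x, z)) = (L x * R z).trace := by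
    intro x z
    rw [hψ, List.ofFn_add, List.prod_append]
    congr 3
    · congr 1
      funext k
      have : e (x, z) (Fin.castAdd m k) = x ⟨_, hmem k⟩ := by
        simp only [e, Equiv.piEquivPiSubtypeProd_symm_apply]
        exact dif_pos (hmem k)
      simp only [← this]
      rfl
    · congr 1
      funext k
      have : e (x, z) (Fin.natAdd n k) = z ⟨_, hnmem k⟩ := by
        simp only [e, Equiv.piEquivPiSubtypeProd_symm_apply]
        exact dif_neg (hnmem k)
      simp only [← this]
  let P : Matrix ({i // i ∈ I} → Fin d) (Fin D × Fin D) ℂ := fun x p => L x p.1 p.2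
  let Q : Matrix (Fin D × Fin D) ({i // i ∉ I} → Fin d) ℂ := fun p z => R z p.2 p.1
  have hM : M = P * Q := by
    ext x z
    rw [Matrix.mul_apply, Fintype.sum_prod_type]
    simp only [M, P, Q, hsplit, Matrix.trace, Matrix.diag, Matrix.mul_apply]
  have hMrank : M.rank ≤ D ^ 2 := by
    rw [hM]
    refine (Matrix.rank_mul_le_left P Q).trans ((Matrix.rank_le_card_width P).trans ?_)
    simp [sq]
  set S : ℝ := ∑ z, ‖ψ z‖ ^ 2 with hS
  have hSpos : 0 < S := by
    obtain ⟨w, hw⟩ := Function.ne_iff.1 hne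
    refine Finset.sum_pos' (fun _ _ => by positivity) ⟨w, Finset.mem_univ _, ?_⟩
    have : ψ w ≠ 0 := hw
    positivity
  have hred : reduced I ρ = ((S⁻¹ : ℝ) : ℂ) • (M * Mᴴ) := by
    ext x y
    rw [Matrix.smul_apply, Matrix.mul_apply, smul_eq_mul, Finset.mul_sum]
    unfold reduced
    refine Finset.sum_congr rfl fun z _ => ?_
    rw [hρ, Complex.ofReal_inv]
    rfl
  have hrank : (reduced I ρ).rank ≤ D ^ 2 := by
    rw [hred, ← Matrix.mul_smul]
    exact (Matrix.rank_mul_le_left _ _).trans hMrank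
  have hpsd : open scoped ComplexOrder in (reduced I ρ).PosSemidef := by
    rw [hred]
    exact posSemidef_smul_gram M _ (inv_pos.2 hSpos).le
  have htrace : (reduced I ρ).trace = 1 := by
    have h1 : (M * Mᴴ).trace = (S : ℂ) := by
      have h2 : (M * Mᴴ).trace = ∑ p, ψ (e p) * starRingEnd ℂ (ψ (e p)) := by
        rw [Fintype.sum_prod_type]
        rfl
      rw [h2, Equiv.sum_comp e (fun w => ψ w * starRingEnd ℂ (ψ w)), hS]
      push_cast
      exact Finset.sum_congr rfl fun w _ => Complex.mul_conj' (ψ w)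
    rw [hred, Matrix.trace_smul, h1, smul_eq_mul, ← Complex.ofReal_mul,
      inv_mul_cancel₀ hSpos.ne', Complex.ofReal_one]
  refine ⟨hrank, ?_⟩
  have h := entropy_le_of_rank (reduced I ρ) hpsd htrace (D ^ 2) (Nat.one_le_pow _ _ hD) hrank
  rw [Nat.cast_pow, Real.logb_pow] at h
  exact_mod_cast h
end
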